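/- arXiv:2602.14325 — 3 statements merged into one kernel-verified Lean document; each statement's English description precedes it below -/
import Mathlib

section
/- In the Lengyel transfer game L(b;x₁,0;1,1), the column with index x₁ is a 2-column — that is, there exists y ∈ ℕ with SG(x₁, y) = 2 — if and only if it is NOT the case that b is even and x₁ = k·b for some odd integer k. -/
/-- The minimum excludant of a set of naturals: the least natural number not in the set. -/
noncomputable def mex (S : Set ℕ) : ℕ := sInf {n : ℕ | n ∉ S}

/-- `SG` is the Sprague–Grundy function of the Lengyel transfer game `L(b; x₁,y₁; x₂,y₂)`:
from `(x,y)` one may move to `(x, y−b)` (when `y ≥ b`), to `(x−x₁, y+y₁)` (when `x ≥ x₁`),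
or to `(x−x₂, y+y₂)` (when `x ≥ x₂`), and `SG` satisfies the mex recurrence. -/
def IsLengyelSG (b x1 y1 x2 y2 : ℕ) (SG : ℕ → ℕ → ℕ) : Prop :=
  ∀ x y : ℕ, SG x y = mex
    ((if b ≤ y then ({SG x (y - b)} : Set ℕ) else ∅) ∪
     (if x1 ≤ x then ({SG (x - x1) (y + y1)} : Set ℕ) else ∅) ∪
     (if x2 ≤ x then ({SG (x - x2) (y + y2)} : Set ℕ) else ∅))

/-!
A removal `(x, y) → (x, y - b)` lowers `x + y` by `b`, and a transfer `(x, y) → (x - 1, y + 1)`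
preserves it. So every complete play using only these two moves consists of `x` transfers and
`(x + y) / b` removals, and where no other move is available `SG x y` is the parity of
`x + (x + y) / b`. This covers all columns before `x₁`.

If `x₁ = k * b`, the move `(x, y) → (x - x₁, y)` shortens this play length by `k * (b + 1)`. When
that number is odd, i.e. `b` is even and `k` is odd, every move still flips the parity, and no
position of the whole board has value `2`. Otherwise some `y < b` makes the play length at
`(x₁, y)` even; there the two options are `(0, y)`, of value `0`, and `(x₁ - 1, y + 1)`, of
value `1`.
-/

theorem mex_eq_of_forall_lt_mem {S : Set ℕ} {n : ℕ} (hn : n ∉ S) (hlt : ∀ m < n, m ∈ S) :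
    mex S = n :=
  IsLeast.csInf_eq ⟨hn, fun m hm => not_lt.mp fun hmn => hm (hlt m hmn)⟩

theorem mex_eq_mod_two {S : Set ℕ} {n : ℕ} (hS : ∀ m ∈ S, m = (n + 1) % 2)
    (hne : Odd n → S.Nonempty) : mex S = n % 2 := by
  refine mex_eq_of_forall_lt_mem (fun hn => by have := hS _ hn; omega) fun m hm => ?_
  obtain ⟨s, hs⟩ := hne (Nat.odd_iff.mpr (by omega))
  have hms : m = s := by have := hS s hs; omega
  exact hms ▸ hs

/-- The number of moves in a complete play from `(x, y)` that uses only removals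
`(x, y) → (x, y - b)` and transfers `(x, y) → (x - 1, y + 1)`; it does not depend on the play. -/
def playLength (b x y : ℕ) : ℕ := x + (x + y) / b

section PlayLength

variable {b x y : ℕ}

theorem playLength_zero_left_of_lt (hy : y < b) : playLength b 0 y = 0 := by
  simp [playLength, Nat.div_eq_of_lt hy]

theorem playLength_sub_right_add_one (hb : 0 < b) (hy : b ≤ y) :
    playLength b x (y - b) + 1 = playLength b x y := by
  have hdiv : (x + y) / b = (x + (y - b)) / b + 1 := by
    rw [← Nat.add_div_right _ hb, add_assoc, Nat.sub_add_cancel hy]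
  rw [playLength, playLength, hdiv, add_assoc]

theorem playLength_sub_one_add_one (hx : 1 ≤ x) :
    playLength b (x - 1) (y + 1) + 1 = playLength b x y := by
  have hsum : x - 1 + (y + 1) = x + y := by omega
  rw [playLength, playLength, hsum]
  omega

theorem playLength_add_mul (hb : 0 < b) (k : ℕ) :
    playLength b (x + k * b) y = playLength b x y + k * (b + 1) := by
  rw [playLength, playLength, add_right_comm x (k * b) y, Nat.add_mul_div_right _ _ hb]
  ring

theorem even_and_exists_odd_mul_of_forall_odd_playLength (hb : 0 < b)
    (hodd : ∀ y < b, Odd (playLength b x y)) : Even b ∧ ∃ k, Odd k ∧ x = k * b := by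
  have hdvd : b ∣ x := by
    by_contra hndvd
    -- Otherwise `x / b` and `(x + y) / b` are consecutive, where `y < b` completes `x` to a
    -- multiple of `b`.
    have hcarry : (x + (b - x % b)) / b = x / b + 1 := by
      have hsum : x + (b - x % b) = (x / b + 1) * b := by
        have := Nat.div_add_mod' x b
        have := Nat.mod_lt x hb
        rw [add_one_mul]
        omega
      rw [hsum, Nat.mul_div_cancel _ hb]
    have hzero := hodd 0 hb
    have hcomplement := hodd (b - x % b) (Nat.sub_lt hb (Nat.emod_pos_of_not_dvd hndvd))
    rw [playLength, Nat.odd_iff] at hzero hcomplement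
    rw [add_zero] at hzero
    omega
  obtain ⟨k, rfl⟩ := exists_eq_mul_left_of_dvd hdvd
  have hprod : Odd (k * (b + 1)) := by
    have hlen : playLength b (k * b) 0 = k * (b + 1) := by
      simpa [playLength] using playLength_add_mul (x := 0) (y := 0) hb k
    exact hlen ▸ hodd 0 hb
  obtain ⟨hk, hsucc⟩ := Nat.odd_mul.mp hprod
  exact ⟨by simpa [parity_simps] using hsucc, k, hk, rfl⟩

end PlayLength

namespace IsLengyelSG

theorem eq_mod_two_of_forall_move_flips_parity {b x1 y1 x2 y2 : ℕ} {SG : ℕ → ℕ → ℕ}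
    (hSG : IsLengyelSG b x1 y1 x2 y2 SG) (hb : 0 < b) (hx1 : 0 < x1) (hx2 : 0 < x2)
    {N : ℕ} {c : ℕ → ℕ → ℕ}
    (hremoval : ∀ x < N, ∀ y, b ≤ y → c x (y - b) ≡ c x y + 1 [MOD 2])
    (hfst : ∀ x < N, ∀ y, x1 ≤ x → c (x - x1) (y + y1) ≡ c x y + 1 [MOD 2])
    (hsnd : ∀ x < N, ∀ y, x2 ≤ x → c (x - x2) (y + y2) ≡ c x y + 1 [MOD 2])
    (hterminal : ∀ x < N, ∀ y, y < b → x < x1 → x < x2 → Even (c x y)) :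
    ∀ x < N, ∀ y, SG x y = c x y % 2 := by
  intro x
  induction x using Nat.strong_induction_on with
  | _ x ihx =>
    intro hx y
    induction y using Nat.strong_induction_on with
    | _ y ihy =>
      rw [hSG x y]
      refine mex_eq_mod_two ?_ fun hodd => ?_
      · simp only [Set.mem_union, Set.mem_ite_empty_right, Set.mem_singleton_iff]
        rintro m ((⟨hle, rfl⟩ | ⟨hle, rfl⟩) | ⟨hle, rfl⟩)
        · exact (ihy (y - b) (by omega)).trans (hremoval x hx y hle)
        · exact (ihx (x - x1) (by omega) (by omega) _).trans (hfst x hx y hle)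
        · exact (ihx (x - x2) (by omega) (by omega) _).trans (hsnd x hx y hle)
      · by_contra hempty
        have hstuck : (y < b ∧ x < x1) ∧ x < x2 := by
          simpa [Set.not_nonempty_iff_eq_empty, Set.union_empty_iff] using hempty
        exact Nat.not_even_iff_odd.mpr hodd (hterminal x hx y hstuck.1.1 hstuck.1.2 hstuck.2)

variable {b x1 : ℕ} {SG : ℕ → ℕ → ℕ}

theorem eq_playLength_mod_two {y1 N : ℕ} (hSG : IsLengyelSG b x1 y1 1 1 SG) (hb : 0 < b)
    (hx1 : 0 < x1) (hfst : ∀ x < N, ∀ y, x1 ≤ x →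
      playLength b (x - x1) (y + y1) ≡ playLength b x y + 1 [MOD 2]) :
    ∀ x < N, ∀ y, SG x y = playLength b x y % 2 := by
  have flips {m n : ℕ} (h : m + 1 = n) : m ≡ n + 1 [MOD 2] := by
    rw [Nat.ModEq]
    omega
  refine hSG.eq_mod_two_of_forall_move_flips_parity hb hx1 one_pos
    (fun x _ y hy => flips (playLength_sub_right_add_one hb hy)) hfst
    (fun x _ y hx => flips (playLength_sub_one_add_one hx)) fun x _ y hy _ hx => ?_
  rw [Nat.lt_one_iff.mp hx, playLength_zero_left_of_lt hy]
  exact Even.zero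

theorem eq_playLength_mod_two_of_lt {y1 x : ℕ} (hSG : IsLengyelSG b x1 y1 1 1 SG)
    (hb : 0 < b) (hx : x < x1) (y : ℕ) : SG x y = playLength b x y % 2 :=
  hSG.eq_playLength_mod_two hb (by omega) (fun _ hlt _ hle => absurd hle hlt.not_ge) x hx y

theorem eq_playLength_mod_two_of_odd {k : ℕ} (hSG : IsLengyelSG b (k * b) 0 1 1 SG)
    (hb : 0 < b) (hodd : Odd (k * (b + 1))) (x y : ℕ) : SG x y = playLength b x y % 2 := by
  have hpos : 0 < k * b := Nat.mul_pos (Nat.pos_of_mul_pos_right hodd.pos) hb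
  refine hSG.eq_playLength_mod_two (N := x + 1) hb hpos (fun x' _ y' hle => ?_) x (by omega) y
  have hlen := playLength_add_mul (x := x' - k * b) (y := y') hb k
  rw [Nat.sub_add_cancel hle] at hlen
  rw [Nat.odd_iff] at hodd
  rw [Nat.ModEq, add_zero]
  omega

theorem eq_two_of_even_playLength {y : ℕ} (hSG : IsLengyelSG b x1 0 1 1 SG) (hx1 : 0 < x1)
    (hy : y < b) (heven : Even (playLength b x1 y)) : SG x1 y = 2 := by
  have hb : 0 < b := by omega
  have hfst : SG 0 y = 0 := by
    rw [hSG.eq_playLength_mod_two_of_lt hb hx1, playLength_zero_left_of_lt hy]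
  have hsnd : SG (x1 - 1) (y + 1) = 1 := by
    have hlen := playLength_sub_one_add_one (b := b) (y := y) hx1
    rw [hSG.eq_playLength_mod_two_of_lt hb (by omega)]
    rw [Nat.even_iff] at heven
    omega
  rw [hSG x1 y, if_neg hy.not_ge, if_pos le_rfl, if_pos (Nat.one_le_of_lt hx1),
    Nat.sub_self, add_zero, hfst, hsnd]
  refine mex_eq_of_forall_lt_mem (by simp) fun m hm => ?_
  interval_cases m <;> simp

end IsLengyelSG

/-- In `L(b;x₁,0;1,1)`, column `x₁` is a 2-column (i.e. `SG(x₁,y) = 2` for some `y`)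
iff it is not the case that `b` is even and `x₁` is an odd multiple of `b`. -/
theorem two_column_criterion (b x1 : ℕ) (hb : 0 < b) (hx1 : 0 < x1)
    (SG : ℕ → ℕ → ℕ) (hSG : IsLengyelSG b x1 0 1 1 SG) :
    (∃ y : ℕ, SG x1 y = 2) ↔ ¬ (Even b ∧ ∃ k : ℕ, Odd k ∧ x1 = k * b) := by
  constructor
  · rintro ⟨y, hy⟩ ⟨hbeven, k, hk, rfl⟩
    have hparity := hSG.eq_playLength_mod_two_of_odd hb (hk.mul hbeven.add_one) (k * b) y
    omega
  · intro hexcept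
    obtain ⟨y, hy, heven⟩ : ∃ y < b, Even (playLength b x1 y) := by
      by_contra! hodd
      exact hexcept <| even_and_exists_odd_mul_of_forall_odd_playLength hb fun y hy =>
        Nat.not_even_iff_odd.mp (hodd y hy)
    exact ⟨y, hSG.eq_two_of_even_playLength hx1 hy heven⟩
end

section
/- (Second Main Theorem) For any Lengyel transfer game L(b;x₁,y₁;x₂,y₂), set g = 2b(x₁+x₂) / gcd(2b, y₁+y₂). Then g is an eventual horizontal period: there exists x₀ ∈ ℕ such that SG(x + g, y) = SG(x,y) for all x ≥ x₀ and all y ∈ ℕ. (Equivalently, the first component of the eventual period divides g.) -/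
/-! Only the options `0` and `1` reached by horizontal moves matter: together with the parity of
`⌊y / b⌋` they determine the value, and going up by `b` rows exchanges `0` and `1` among them.
Write `d` for the value at `(x + x₁ + x₂, y)`. Its two horizontal options have `w`, the value at
`(x, y + y₁ + y₂)`, as a common option, so when `w ≤ 1` each of them is `1 - w` or at least `2`.
Hence `2 ≤ d` forces `2 ≤ w`: along a diagonal the values at least `2` can only disappear, and as
there are finitely many rows modulo `2b`, for large `x` they neither appear nor disappear. From then
on the options `0` and `1` are constant along diagonals, and `2b / gcd(2b, y₁ + y₂)` diagonal steps
return to the same row modulo `2b`. -/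

lemma mex_eq_of_forall_lt {S : Set ℕ} {m : ℕ} (hm : m ∉ S) (hlt : ∀ k < m, k ∈ S) : mex S = m :=
  le_antisymm (Nat.sInf_le hm) <| not_lt.1 fun h ↦
    Nat.sInf_mem (s := {n | n ∉ S}) ⟨m, hm⟩ (hlt _ h)

lemma exists_forall_add_eq_of_add_le {f : ℕ → ℕ} {s : ℕ} (hf : ∀ x, f (x + s) ≤ f x) :
    ∃ x0, ∀ x ≥ x0, f (x + s) = f x := by
  -- The sums over windows of length `s` decrease in steps of `f x - f (x + s)`.
  let window (x : ℕ) : ℕ := ∑ j ∈ Finset.range s, f (x + j)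
  have hwindow (x : ℕ) : window (x + 1) + f x = window x + f (x + s) := by
    calc window (x + 1) + f x = ∑ j ∈ Finset.range (s + 1), f (x + j) := by
          simp [window, Finset.sum_range_succ', add_assoc, add_comm 1]
      _ = window x + f (x + s) := Finset.sum_range_succ _ _
  have hanti : Antitone window := antitone_nat_of_succ_le fun x ↦ by
    have := hwindow x
    have := hf x
    omega
  obtain ⟨x0, hx0⟩ := WellFoundedLT.antitone_chain_condition hanti
  refine ⟨x0, fun x hx ↦ ?_⟩
  have := hx0 x hx
  have := hx0 (x + 1) (by omega)
  have := hwindow x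
  omega

lemma iff_add_mul_of_iff_add {P : ℕ → ℕ → Prop} {s t x0 x : ℕ}
    (hP : ∀ x ≥ x0, ∀ y, P (x + s) y ↔ P x (y + t)) (hx : x0 ≤ x) (n y : ℕ) :
    P (x + n * s) y ↔ P x (y + n * t) := by
  induction n generalizing y with
  | zero => simp
  | succ n ih =>
    rw [add_one_mul n s, ← add_assoc, hP _ (by omega), ih, add_one_mul, add_assoc, add_comm t]

section PeriodicCount

variable {p q : ℕ → Prop} [DecidablePred p] [DecidablePred q] {a t : ℕ}

lemma count_add_right_of_periodic (hp : Function.Periodic p a) :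
    a.count (fun y ↦ p (y + t)) = a.count p := by
  have hright : (t + a).count p = t.count p + a.count p := by
    simp only [Nat.count_add', hp _]
  have hleft := Nat.count_add' p a t
  rw [add_comm a t] at hleft
  omega

lemma count_le_count_of_imp_add (hq : Function.Periodic q a) (hpq : ∀ y, p y → q (y + t)) :
    a.count p ≤ a.count q :=
  count_add_right_of_periodic (t := t) hq ▸ Nat.count_mono_left fun y _ ↦ hpq y

lemma iff_add_of_count_eq (ha : 0 < a) (hp : Function.Periodic p a) (hq : Function.Periodic q a)
    (hpq : ∀ y, p y → q (y + t)) (hcount : a.count p = a.count q) (y : ℕ) :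
    p y ↔ q (y + t) := by
  have hq' : Function.Periodic (fun y ↦ q (y + t)) a := fun y ↦ by
    simpa only [add_right_comm] using hq (y + t)
  have hfilter : (Finset.range a).filter p = (Finset.range a).filter (fun y ↦ q (y + t)) := by
    refine Finset.eq_of_subset_of_card_le (Finset.monotone_filter_right _ fun y _ ↦ hpq y) ?_
    rw [← Nat.count_eq_card_filter_range, ← Nat.count_eq_card_filter_range,
      count_add_right_of_periodic hq, hcount]
  have hmod := Finset.ext_iff.1 hfilter (y % a)
  simp only [Finset.mem_filter, Finset.mem_range, Nat.mod_lt y ha, true_and] at hmod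
  rwa [hp.map_mod_nat, hq'.map_mod_nat y] at hmod

end PeriodicCount

/-- The phase of row `y`: the parity of the number of vertical moves available from it. -/
def rowPhase (b y : ℕ) : ℕ := y / b % 2

lemma rowPhase_le_one (b y : ℕ) : rowPhase b y ≤ 1 :=
  Nat.le_of_lt_succ (Nat.mod_lt _ two_pos)

lemma rowPhase_of_lt {b y : ℕ} (hy : y < b) : rowPhase b y = 0 := by
  simp [rowPhase, Nat.div_eq_of_lt hy]

lemma rowPhase_add_self {b : ℕ} (hb : 0 < b) (y : ℕ) : rowPhase b (y + b) = 1 - rowPhase b y := by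
  unfold rowPhase
  rw [Nat.add_div_right y hb]
  omega

open Classical in
/-- The value of a position in a row of phase `e` whose horizontal options have the values in `S`.
Only the membership of `0` and `1` in `S` matters. -/
noncomputable def phaseValue (e : ℕ) (S : Set ℕ) : ℕ :=
  if 0 ∈ S then if 1 ∈ S then 2 + e else 1 else if 1 ∈ S then 0 else e

section PhaseValue

variable {e k : ℕ} {S T : Set ℕ}

lemma phaseValue_congr (h : ∀ k ≤ 1, k ∈ S ↔ k ∈ T) : phaseValue e S = phaseValue e T := by
  have h0 : 0 ∈ S ↔ 0 ∈ T := h 0 zero_le_one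
  have h1 : 1 ∈ S ↔ 1 ∈ T := h 1 le_rfl
  unfold phaseValue
  grind

lemma two_le_phaseValue_iff (he : e ≤ 1) : 2 ≤ phaseValue e S ↔ 0 ∈ S ∧ 1 ∈ S := by
  unfold phaseValue
  split_ifs <;> grind

lemma phaseValue_add_eq_one (hk : k ≤ 1) (hmem : k ∈ S) (hle : phaseValue e S ≤ 1) :
    phaseValue e S + k = 1 := by
  unfold phaseValue at hle ⊢
  interval_cases k <;> split_ifs at hle ⊢ <;> grind

lemma phaseValue_eq_iff_one_sub (he : e ≤ 1) (hk : k ≤ 1) (h : ∀ k ≤ 1, k ∈ S ↔ 1 - k ∈ T) :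
    phaseValue e S = k ↔ phaseValue (1 - e) T = 1 - k := by
  have h0 : 0 ∈ S ↔ 1 ∈ T := h 0 zero_le_one
  have h1 : 1 ∈ S ↔ 0 ∈ T := h 1 le_rfl
  simp only [phaseValue, h0, h1]
  interval_cases k <;> split_ifs <;> grind

lemma mex_eq_phaseValue_zero (hS : 0 ∈ S → 1 ∈ S → ∀ k ∈ S, k ≤ 1) : mex S = phaseValue 0 S := by
  unfold phaseValue
  split_ifs <;> refine mex_eq_of_forall_lt ?_ ?_ <;> grind

lemma mex_insert_phaseValue (he : e ≤ 1) (hT : 0 ∈ T → 1 ∈ T → ∀ k ∈ T, k ≤ 1)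
    (h : ∀ k ≤ 1, k ∈ S ↔ 1 - k ∈ T) :
    mex (insert (phaseValue e S) T) = phaseValue (1 - e) T := by
  have h0 : 0 ∈ S ↔ 1 ∈ T := h 0 zero_le_one
  have h1 : 1 ∈ S ↔ 0 ∈ T := h 1 le_rfl
  simp only [phaseValue, h0, h1]
  -- Up to irrelevant larger elements, `mex {2 + e, 0, 1} = 2 + (1 - e)`, `mex {0} = 1`,
  -- `mex {1} = 0` and `mex {e} = 1 - e`.
  refine mex_eq_of_forall_lt ?_ ?_ <;> interval_cases e <;> grind

lemma eq_phaseValue_of_eq_mex {b : ℕ} (hb : 0 < b) {f : ℕ → ℕ} {H : ℕ → Set ℕ}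
    (hf : ∀ y, f y = mex ((if b ≤ y then {f (y - b)} else ∅) ∪ H y))
    (hH : ∀ y, 0 ∈ H y → 1 ∈ H y → ∀ k ∈ H y, k ≤ 1)
    (hswap : ∀ y, ∀ k ≤ 1, k ∈ H y ↔ 1 - k ∈ H (y + b)) (y : ℕ) :
    f y = phaseValue (rowPhase b y) (H y) := by
  induction y using Nat.strong_induction_on with
  | _ y ih =>
    rw [hf]
    rcases lt_or_ge y b with hy | hy
    · rw [if_neg hy.not_ge, Set.empty_union, rowPhase_of_lt hy, mex_eq_phaseValue_zero (hH y)]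
    · obtain ⟨z, rfl⟩ := Nat.exists_eq_add_of_le' hy
      rw [if_pos hy, Nat.add_sub_cancel, ih z (by omega), Set.singleton_union,
        rowPhase_add_self hb, mex_insert_phaseValue (rowPhase_le_one b z) (hH _) (hswap z)]

end PhaseValue

/-- The set of values of the positions reached by a horizontal move from `(x, y)`. -/
def horizontalOptions (x1 y1 x2 y2 : ℕ) (SG : ℕ → ℕ → ℕ) (x y : ℕ) : Set ℕ :=
  (if x1 ≤ x then {SG (x - x1) (y + y1)} else ∅) ∪ (if x2 ≤ x then {SG (x - x2) (y + y2)} else ∅)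

section HorizontalOptions

variable {b x1 y1 x2 y2 : ℕ} {SG : ℕ → ℕ → ℕ} {x y k : ℕ}

local notation "𝓗" => horizontalOptions x1 y1 x2 y2 SG

lemma mem_horizontalOptions : k ∈ 𝓗 x y ↔
    (x1 ≤ x ∧ SG (x - x1) (y + y1) = k) ∨ (x2 ≤ x ∧ SG (x - x2) (y + y2) = k) := by
  unfold horizontalOptions
  split_ifs <;> simp_all [eq_comm, or_comm]

lemma le_one_of_mem_horizontalOptions (h0 : 0 ∈ 𝓗 x y) (h1 : 1 ∈ 𝓗 x y) (hk : k ∈ 𝓗 x y) :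
    k ≤ 1 := by
  rw [mem_horizontalOptions] at h0 h1 hk
  omega

lemma mem_horizontalOptions_add :
    k ∈ 𝓗 (x + (x1 + x2)) y ↔ SG (x + x2) (y + y1) = k ∨ SG (x + x1) (y + y2) = k := by
  rw [mem_horizontalOptions, show x + (x1 + x2) - x1 = x + x2 by omega,
    show x + (x1 + x2) - x2 = x + x1 by omega]
  simp only [show x1 ≤ x + (x1 + x2) by omega, show x2 ≤ x + (x1 + x2) by omega, true_and]

lemma exists_le_one_mem_horizontalOptions_add :
    (∃ k ≤ 1, k ∈ 𝓗 (x + (x1 + x2)) y) ↔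
      SG (x + x2) (y + y1) ≤ 1 ∨ SG (x + x1) (y + y2) ≤ 1 := by
  simp only [mem_horizontalOptions_add, and_or_left, exists_or, exists_eq_right']

lemma exists_le_one_mem_horizontalOptions_add_iff {x0 : ℕ}
    (hdiag : ∀ x ≥ x0, ∀ y, 2 ≤ SG (x + (x1 + x2)) y ↔ 2 ≤ SG x (y + (y1 + y2)))
    (hx : x0 + (x1 + x2) ≤ x) :
    (∃ k ≤ 1, k ∈ 𝓗 (x + (x1 + x2)) y) ↔ ∃ k ≤ 1, k ∈ 𝓗 x (y + (y1 + y2)) := by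
  obtain ⟨z, rfl⟩ := Nat.exists_eq_add_of_le' (le_of_add_le_right hx)
  have hleft := hdiag (z + x2) (by omega) (y + y1)
  have hright := hdiag (z + x1) (by omega) (y + y2)
  rw [exists_le_one_mem_horizontalOptions_add, exists_le_one_mem_horizontalOptions_add,
    add_right_comm z _ x2, add_right_comm z _ x1, add_right_comm y _ y1, add_right_comm y _ y2]
  omega

lemma diagonal_mem_horizontalOptions_left : SG x (y + (y1 + y2)) ∈ 𝓗 (x + x2) (y + y1) :=
  mem_horizontalOptions.2 <| .inr ⟨by omega, by rw [Nat.add_sub_cancel, add_assoc]⟩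

lemma diagonal_mem_horizontalOptions_right : SG x (y + (y1 + y2)) ∈ 𝓗 (x + x1) (y + y2) :=
  mem_horizontalOptions.2 <| .inl ⟨by omega, by rw [Nat.add_sub_cancel, add_assoc, add_comm y2]⟩

namespace IsLengyelSG

lemma eq_phaseValue_of_swap (hSG : IsLengyelSG b x1 y1 x2 y2 SG) (hb : 0 < b)
    (hswap : ∀ y, ∀ k ≤ 1, k ∈ 𝓗 x y ↔ 1 - k ∈ 𝓗 x (y + b)) (y : ℕ) :
    SG x y = phaseValue (rowPhase b y) (𝓗 x y) :=
  eq_phaseValue_of_eq_mex hb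
    (fun y ↦ by rw [horizontalOptions, ← Set.union_assoc]; exact hSG x y)
    (fun _ h0 h1 _ ↦ le_one_of_mem_horizontalOptions h0 h1) hswap y

lemma mem_horizontalOptions_iff_one_sub (hSG : IsLengyelSG b x1 y1 x2 y2 SG) (hb : 0 < b)
    (hx1 : 0 < x1) (hx2 : 0 < x2) (x y k : ℕ) (hk : k ≤ 1) : k ∈ 𝓗 x y ↔ 1 - k ∈ 𝓗 x (y + b) := by
  induction x using Nat.strong_induction_on generalizing y k with
  | _ x ih =>
    have hswap : ∀ x' < x, ∀ y, SG x' y = k ↔ SG x' (y + b) = 1 - k := fun x' hx' y ↦ by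
      rw [hSG.eq_phaseValue_of_swap hb (ih x' hx'), hSG.eq_phaseValue_of_swap hb (ih x' hx'),
        rowPhase_add_self hb, phaseValue_eq_iff_one_sub (rowPhase_le_one b y) hk (ih x' hx' y)]
    rw [mem_horizontalOptions, mem_horizontalOptions]
    refine or_congr (and_congr_right fun h ↦ ?_) (and_congr_right fun h ↦ ?_) <;>
      rw [hswap _ (by omega), add_right_comm]

lemma eq_phaseValue (hSG : IsLengyelSG b x1 y1 x2 y2 SG) (hb : 0 < b)
    (hx1 : 0 < x1) (hx2 : 0 < x2) (x y : ℕ) : SG x y = phaseValue (rowPhase b y) (𝓗 x y) :=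
  hSG.eq_phaseValue_of_swap hb (hSG.mem_horizontalOptions_iff_one_sub hb hx1 hx2 x) y

lemma periodic_mem_horizontalOptions (hSG : IsLengyelSG b x1 y1 x2 y2 SG) (hb : 0 < b)
    (hx1 : 0 < x1) (hx2 : 0 < x2) (hk : k ≤ 1) (x : ℕ) :
    Function.Periodic (fun y ↦ k ∈ 𝓗 x y) (2 * b) := fun y ↦ by
  have hswap := hSG.mem_horizontalOptions_iff_one_sub hb hx1 hx2 x
  beta_reduce
  rw [hswap y k hk, hswap (y + b) (1 - k) (by omega), Nat.sub_sub_self hk, add_assoc, ← two_mul]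

lemma two_le_iff (hSG : IsLengyelSG b x1 y1 x2 y2 SG) (hb : 0 < b)
    (hx1 : 0 < x1) (hx2 : 0 < x2) : 2 ≤ SG x y ↔ 0 ∈ 𝓗 x y ∧ 1 ∈ 𝓗 x y := by
  rw [hSG.eq_phaseValue hb hx1 hx2, two_le_phaseValue_iff (rowPhase_le_one b y)]

lemma periodic_two_le (hSG : IsLengyelSG b x1 y1 x2 y2 SG) (hb : 0 < b)
    (hx1 : 0 < x1) (hx2 : 0 < x2) (x : ℕ) :
    Function.Periodic (fun y ↦ 2 ≤ SG x y) (2 * b) := fun y ↦ by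
  simp only [hSG.two_le_iff hb hx1 hx2]
  exact congrArg₂ And (hSG.periodic_mem_horizontalOptions hb hx1 hx2 zero_le_one x y)
    (hSG.periodic_mem_horizontalOptions hb hx1 hx2 le_rfl x y)

lemma add_eq_one_of_mem_horizontalOptions (hSG : IsLengyelSG b x1 y1 x2 y2 SG) (hb : 0 < b)
    (hx1 : 0 < x1) (hx2 : 0 < x2) (hk : k ≤ 1) (hmem : k ∈ 𝓗 x y) (hle : SG x y ≤ 1) :
    SG x y + k = 1 := by
  rw [hSG.eq_phaseValue hb hx1 hx2] at hle ⊢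
  exact phaseValue_add_eq_one hk hmem hle

lemma add_eq_one_of_mem_horizontalOptions_add (hSG : IsLengyelSG b x1 y1 x2 y2 SG) (hb : 0 < b)
    (hx1 : 0 < x1) (hx2 : 0 < x2) (hk : k ≤ 1) (hmem : k ∈ 𝓗 (x + (x1 + x2)) y)
    (hle : SG x (y + (y1 + y2)) ≤ 1) : SG x (y + (y1 + y2)) + k = 1 := by
  rw [add_comm]
  rcases mem_horizontalOptions_add.1 hmem with rfl | rfl
  · exact hSG.add_eq_one_of_mem_horizontalOptions hb hx1 hx2 hle
      diagonal_mem_horizontalOptions_left hk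
  · exact hSG.add_eq_one_of_mem_horizontalOptions hb hx1 hx2 hle
      diagonal_mem_horizontalOptions_right hk

lemma two_le_of_two_le_add (hSG : IsLengyelSG b x1 y1 x2 y2 SG) (hb : 0 < b)
    (hx1 : 0 < x1) (hx2 : 0 < x2) (h : 2 ≤ SG (x + (x1 + x2)) y) : 2 ≤ SG x (y + (y1 + y2)) := by
  by_contra! hlt
  obtain ⟨h0, h1⟩ := (hSG.two_le_iff hb hx1 hx2).1 h
  have := hSG.add_eq_one_of_mem_horizontalOptions_add hb hx1 hx2 zero_le_one h0 (by omega)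
  have := hSG.add_eq_one_of_mem_horizontalOptions_add hb hx1 hx2 le_rfl h1 (by omega)
  omega

lemma exists_two_le_add_iff (hSG : IsLengyelSG b x1 y1 x2 y2 SG) (hb : 0 < b)
    (hx1 : 0 < x1) (hx2 : 0 < x2) : ∃ x0, ∀ x ≥ x0, ∀ y,
    2 ≤ SG (x + (x1 + x2)) y ↔ 2 ≤ SG x (y + (y1 + y2)) := by
  have hper := hSG.periodic_two_le hb hx1 hx2
  have himp (x y : ℕ) := hSG.two_le_of_two_le_add hb hx1 hx2 (x := x) (y := y)
  obtain ⟨x0, hx0⟩ := exists_forall_add_eq_of_add_le (f := fun x ↦ (2 * b).count fun y ↦ 2 ≤ SG x y)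
    fun x ↦ count_le_count_of_imp_add (hper x) (himp x)
  exact ⟨x0, fun x hx ↦ iff_add_of_count_eq (by omega) (hper _) (hper x) (himp x) (hx0 x hx)⟩

lemma exists_mem_horizontalOptions_add_iff (hSG : IsLengyelSG b x1 y1 x2 y2 SG) (hb : 0 < b)
    (hx1 : 0 < x1) (hx2 : 0 < x2) : ∃ x0, ∀ x ≥ x0, ∀ y, ∀ k ≤ 1,
    k ∈ 𝓗 (x + (x1 + x2)) y ↔ k ∈ 𝓗 x (y + (y1 + y2)) := by
  obtain ⟨x0, hx0⟩ := hSG.exists_two_le_add_iff hb hx1 hx2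
  refine ⟨x0 + (x1 + x2), fun x hx y k hk ↦ ?_⟩
  rcases le_or_gt 2 (SG x (y + (y1 + y2))) with hw | hw
  · obtain ⟨h0, h1⟩ := (hSG.two_le_iff hb hx1 hx2).1 hw
    obtain ⟨h0', h1'⟩ := (hSG.two_le_iff hb hx1 hx2).1 ((hx0 x (by omega) y).2 hw)
    interval_cases k
    · exact iff_of_true h0' h0
    · exact iff_of_true h1' h1
  · have hnonempty := exists_le_one_mem_horizontalOptions_add_iff (y := y) hx0 hx
    constructor <;> intro hmem
    · have hadd := hSG.add_eq_one_of_mem_horizontalOptions_add hb hx1 hx2 hk hmem (by omega)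
      obtain ⟨l, hl, hlmem⟩ := hnonempty.1 ⟨k, hk, hmem⟩
      have := hSG.add_eq_one_of_mem_horizontalOptions hb hx1 hx2 hl hlmem (by omega)
      rwa [show k = l by omega]
    · have hadd := hSG.add_eq_one_of_mem_horizontalOptions hb hx1 hx2 hk hmem (by omega)
      obtain ⟨l, hl, hlmem⟩ := hnonempty.2 ⟨k, hk, hmem⟩
      have := hSG.add_eq_one_of_mem_horizontalOptions_add hb hx1 hx2 hl hlmem (by omega)
      rwa [show k = l by omega]

end IsLengyelSG

end HorizontalOptions

/-- Second Main Theorem: `g = 2b(x₁+x₂)/gcd(2b, y₁+y₂)` is an eventual horizontal period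
of `L(b;x₁,y₁;x₂,y₂)`. -/
theorem second_main_theorem (b x1 x2 y1 y2 : ℕ) (hb : 0 < b) (hx1 : 0 < x1) (hx2 : 0 < x2)
    (SG : ℕ → ℕ → ℕ) (hSG : IsLengyelSG b x1 y1 x2 y2 SG) :
    ∃ x0 : ℕ, ∀ x : ℕ, x0 ≤ x → ∀ y : ℕ,
      SG (x + 2 * b * (x1 + x2) / Nat.gcd (2 * b) (y1 + y2)) y = SG x y := by
  obtain ⟨x0, hdiag⟩ := hSG.exists_mem_horizontalOptions_add_iff hb hx1 hx2
  refine ⟨x0, fun x hx y ↦ ?_⟩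
  have hg : 2 * b * (x1 + x2) / Nat.gcd (2 * b) (y1 + y2) =
      2 * b / Nat.gcd (2 * b) (y1 + y2) * (x1 + x2) :=
    Nat.mul_div_right_comm (Nat.gcd_dvd_left _ _) _
  have hn : 2 * b / Nat.gcd (2 * b) (y1 + y2) * (y1 + y2) =
      (y1 + y2) / Nat.gcd (2 * b) (y1 + y2) * (2 * b) := by
    rw [← Nat.mul_div_right_comm (Nat.gcd_dvd_left _ _),
      ← Nat.mul_div_right_comm (Nat.gcd_dvd_right _ _), mul_comm]
  rw [hg, hSG.eq_phaseValue hb hx1 hx2, hSG.eq_phaseValue hb hx1 hx2 x y]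
  refine phaseValue_congr fun k hk ↦ ?_
  have hperiodic := hSG.periodic_mem_horizontalOptions hb hx1 hx2 hk x
  rw [iff_add_mul_of_iff_add (P := fun x y ↦ k ∈ horizontalOptions x1 y1 x2 y2 SG x y)
    (fun x hx y ↦ hdiag x hx y k hk) hx, hn]
  exact iff_of_eq (hperiodic.nat_mul _ y)
end

section
/- Suppose 0 < y₁ < 2b, 0 < y₂ < 2b, and y₁ + y₂ = 2b. Then the Lengyel transfer game L(b;x₁,y₁;x₂,y₂) has diagonal periodicity — SG*(x,y) = SG*(x + x₁ + x₂, y − 2b) for all (x,y) with y ≥ 2b — and it has no preperiod and horizontal period x₁ + x₂: SG(x + x₁ + x₂, y) = SG(x,y) for all (x,y) ∈ ℕ×ℕ. -/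
/-! Moving up by `b` changes every Grundy value `v` to `v ^^^ 1`. Indeed the move `y ↦ y - b` makes
`SG x y` an option value of `(x, y + b)`, and by induction the remaining option values there are
the transfer values of `(x, y)` with the last bit flipped; since `v < m ^^^ 1` and `v ≠ m` force
`v ^^^ 1 < m`, the mex flips its last bit as well. Hence `SG x` has period `2 * b`.

When `2 * b ∣ y1 + y2`, performing both transfers from `(x + x1 + x2, y)` therefore leads to the
value `SG x y`, so neither single transfer has that value. By induction every option value
of `(x, y)` is also one of `(x + x1 + x2, y)`, and the value `SG x y` itself is not, so the two
mexes agree. -/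

theorem isLeast_mex {S : Set ℕ} (hS : Sᶜ.Nonempty) : IsLeast Sᶜ (mex S) :=
  ⟨Nat.sInf_mem hS, fun _ => Nat.sInf_le⟩

theorem xor_one_lt_of_lt_xor_one {m v : ℕ} (hlt : v < m ^^^ 1) (hne : v ≠ m) : v ^^^ 1 < m :=
  (Nat.lt_xor_cases hlt).resolve_right fun h => hne (Nat.xor_eq_zero_iff.1 (Nat.lt_one_iff.1 h))

theorem isLeast_compl_insert_image_xor_one {S T : Set ℕ} {m : ℕ} (hm : IsLeast Sᶜ m)
    (hTS : T ⊆ S) (hST : S ⊆ insert (m ^^^ 1) T) :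
    IsLeast (insert m ((· ^^^ 1) '' T))ᶜ (m ^^^ 1) := by
  constructor
  · rintro (heq | ⟨v, hv, heq⟩)
    · simp at heq
    · exact hm.1 (hTS (Nat.xor_left_inj.1 heq ▸ hv))
  · intro v hv
    obtain ⟨hne, himage⟩ : v ≠ m ∧ v ∉ (· ^^^ 1) '' T := by simpa using hv
    by_contra! hlt
    have hvS : v ^^^ 1 ∈ S := by
      by_contra h
      exact (hm.2 h).not_gt (xor_one_lt_of_lt_xor_one hlt hne)
    rcases hST hvS with heq | hvT
    · exact hne (Nat.xor_left_inj.1 heq)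
    · exact himage ⟨v ^^^ 1, hvT, by simp⟩

/-- The values of `SG` at the positions reached from `(x, y)` by one of the two transfer moves.
The first coordinate `u` of the target is given by `u + x1 = x` or `u + x2 = x`, which avoids
truncated subtraction. -/
def transferValues (x1 y1 x2 y2 : ℕ) (SG : ℕ → ℕ → ℕ) (x y : ℕ) : Set ℕ :=
  {v | (∃ u, u + x1 = x ∧ SG u (y + y1) = v) ∨ ∃ u, u + x2 = x ∧ SG u (y + y2) = v}

/-- The values of `SG` at all options of `(x, y)`: the values at the targets of the transfer
moves and, writing `y = w + b`, the value at the target `(x, w)` of the subtraction move. -/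
def optionValues (b x1 y1 x2 y2 : ℕ) (SG : ℕ → ℕ → ℕ) (x y : ℕ) : Set ℕ :=
  {v | ∃ w, w + b = y ∧ SG x w = v} ∪ transferValues x1 y1 x2 y2 SG x y

variable {b x1 y1 x2 y2 : ℕ} {SG : ℕ → ℕ → ℕ}

theorem transferValues_add_right_eq_image {f : ℕ → ℕ} {c x : ℕ} (hx1 : 0 < x1) (hx2 : 0 < x2)
    (hf : ∀ u < x, ∀ z, SG u (z + c) = f (SG u z)) (y : ℕ) :
    transferValues x1 y1 x2 y2 SG x (y + c) = f '' transferValues x1 y1 x2 y2 SG x y := by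
  apply Set.Subset.antisymm
  · rintro v (⟨u, hu, rfl⟩ | ⟨u, hu, rfl⟩)
    · exact ⟨_, .inl ⟨u, hu, rfl⟩, by rw [add_right_comm, hf u (by lia)]⟩
    · exact ⟨_, .inr ⟨u, hu, rfl⟩, by rw [add_right_comm, hf u (by lia)]⟩
  · rintro _ ⟨v, ⟨u, hu, rfl⟩ | ⟨u, hu, rfl⟩, rfl⟩
    · exact .inl ⟨u, hu, by rw [add_right_comm, hf u (by lia)]⟩
    · exact .inr ⟨u, hu, by rw [add_right_comm, hf u (by lia)]⟩

theorem optionValues_add_right (x y : ℕ) :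
    optionValues b x1 y1 x2 y2 SG x (y + b) =
      insert (SG x y) (transferValues x1 y1 x2 y2 SG x (y + b)) := by
  ext v
  simp [optionValues, eq_comm]

theorem optionValues_eq_ite (x y : ℕ) :
    optionValues b x1 y1 x2 y2 SG x y =
      (if b ≤ y then ({SG x (y - b)} : Set ℕ) else ∅) ∪
      (if x1 ≤ x then ({SG (x - x1) (y + y1)} : Set ℕ) else ∅) ∪
      (if x2 ≤ x then ({SG (x - x2) (y + y2)} : Set ℕ) else ∅) := by
  have exists_add_eq_iff {a n v : ℕ} {f : ℕ → ℕ} :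
      (∃ w, w + a = n ∧ f w = v) ↔ v ∈ if a ≤ n then ({f (n - a)} : Set ℕ) else ∅ := by
    split_ifs <;> grind
  ext v
  simp only [optionValues, transferValues, Set.mem_union, Set.mem_ofPred_eq, or_assoc,
    exists_add_eq_iff (f := SG x), exists_add_eq_iff (f := (SG · (y + y1))),
    exists_add_eq_iff (f := (SG · (y + y2)))]

theorem finite_optionValues (x y : ℕ) : (optionValues b x1 y1 x2 y2 SG x y).Finite := by
  rw [optionValues_eq_ite]
  split_ifs <;> simp

namespace IsLengyelSG

theorem isLeast (hSG : IsLengyelSG b x1 y1 x2 y2 SG) (x y : ℕ) :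
    IsLeast (optionValues b x1 y1 x2 y2 SG x y)ᶜ (SG x y) := by
  rw [hSG x y, ← optionValues_eq_ite]
  exact isLeast_mex (finite_optionValues x y).exists_notMem

theorem apply_add_b_ne (hSG : IsLengyelSG b x1 y1 x2 y2 SG) (x y : ℕ) :
    SG x (y + b) ≠ SG x y :=
  fun h => (hSG.isLeast x (y + b)).1 (.inl ⟨y, rfl, h.symm⟩)

theorem apply_add_x1_ne (hSG : IsLengyelSG b x1 y1 x2 y2 SG) (x y : ℕ) :
    SG (x + x1) y ≠ SG x (y + y1) :=
  fun h => (hSG.isLeast (x + x1) y).1 (.inr (.inl ⟨x, rfl, h.symm⟩))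

theorem apply_add_x2_ne (hSG : IsLengyelSG b x1 y1 x2 y2 SG) (x y : ℕ) :
    SG (x + x2) y ≠ SG x (y + y2) :=
  fun h => (hSG.isLeast (x + x2) y).1 (.inr (.inr ⟨x, rfl, h.symm⟩))

theorem apply_add_b (hSG : IsLengyelSG b x1 y1 x2 y2 SG) (hb : 0 < b) (hx1 : 0 < x1)
    (hx2 : 0 < x2) (x y : ℕ) : SG x (y + b) = SG x y ^^^ 1 := by
  induction x using Nat.strong_induction_on generalizing y with | _ x ihx
  induction y using Nat.strong_induction_on with | _ y ihy
  have hsub : optionValues b x1 y1 x2 y2 SG x y ⊆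
      insert (SG x y ^^^ 1) (transferValues x1 y1 x2 y2 SG x y) := by
    rintro v (⟨w, rfl, rfl⟩ | hv)
    · simp [ihy w (by lia)]
    · exact .inr hv
  have hflip : IsLeast (optionValues b x1 y1 x2 y2 SG x (y + b))ᶜ (SG x y ^^^ 1) := by
    rw [optionValues_add_right, transferValues_add_right_eq_image (f := (· ^^^ 1)) hx1 hx2 ihx]
    exact isLeast_compl_insert_image_xor_one (hSG.isLeast x y) Set.subset_union_right hsub
  exact (hSG.isLeast x (y + b)).unique hflip

theorem periodic_two_mul_b (hSG : IsLengyelSG b x1 y1 x2 y2 SG) (hb : 0 < b) (hx1 : 0 < x1)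
    (hx2 : 0 < x2) (x : ℕ) : Function.Periodic (SG x) (2 * b) := fun y => by
  simp [two_mul, ← add_assoc, hSG.apply_add_b hb hx1 hx2]

theorem apply_add_y1_add_y2 (hSG : IsLengyelSG b x1 y1 x2 y2 SG) (hb : 0 < b) (hx1 : 0 < x1)
    (hx2 : 0 < x2) (hsum : 2 * b ∣ y1 + y2) (x y : ℕ) : SG x (y + y1 + y2) = SG x y := by
  obtain ⟨k, hk⟩ := hsum
  rw [add_assoc, hk, mul_comm]
  exact (hSG.periodic_two_mul_b hb hx1 hx2 x).nsmul k y

theorem apply_add_x1_add_x2 (hSG : IsLengyelSG b x1 y1 x2 y2 SG) (hb : 0 < b) (hx1 : 0 < x1)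
    (hx2 : 0 < x2) (hsum : 2 * b ∣ y1 + y2) (x y : ℕ) : SG (x + x1 + x2) y = SG x y := by
  induction x using Nat.strong_induction_on generalizing y with | _ x ihx
  induction y using Nat.strong_induction_on with | _ y ihy
  have hsub : optionValues b x1 y1 x2 y2 SG x y ⊆
      optionValues b x1 y1 x2 y2 SG (x + x1 + x2) y := by
    rintro v (⟨w, hw, rfl⟩ | ⟨u, hu, rfl⟩ | ⟨u, hu, rfl⟩)
    · exact .inl ⟨w, hw, ihy w (by lia)⟩
    · exact .inr (.inl ⟨u + x1 + x2, by lia, ihx u (by lia) _⟩)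
    · exact .inr (.inr ⟨u + x1 + x2, by lia, ihx u (by lia) _⟩)
  have hmem : SG x y ∉ optionValues b x1 y1 x2 y2 SG (x + x1 + x2) y := by
    have hreturn := hSG.apply_add_y1_add_y2 hb hx1 hx2 hsum x y
    rintro (⟨w, rfl, h⟩ | ⟨u, hu, h⟩ | ⟨u, hu, h⟩)
    · exact hSG.apply_add_b_ne x w (h.symm.trans (ihy w (by lia)))
    · obtain rfl : u = x + x2 := by lia
      exact hSG.apply_add_x2_ne x (y + y1) (h.trans hreturn.symm)
    · obtain rfl : u = x + x1 := by lia
      exact hSG.apply_add_x1_ne x (y + y2) (h.trans (add_right_comm y y1 y2 ▸ hreturn.symm))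
  exact (hSG.isLeast (x + x1 + x2) y).unique
    ⟨hmem, lowerBounds_mono_set (Set.compl_subset_compl.2 hsub) (hSG.isLeast x y).2⟩

end IsLengyelSG

theorem sum_eq_two_b_case_general (b x1 x2 y1 y2 : ℕ) (hb : 0 < b) (hx1 : 0 < x1)
    (hx2 : 0 < x2) (hsum : 2 * b ∣ y1 + y2)
    (SG : ℕ → ℕ → ℕ) (hSG : IsLengyelSG b x1 y1 x2 y2 SG) :
    (∀ x y : ℕ, 2 * b ≤ y → SG x y = SG (x + x1 + x2) (y - 2 * b)) ∧
    (∀ x y : ℕ, SG (x + x1 + x2) y = SG x y) := by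
  have hperiod := hSG.apply_add_x1_add_x2 hb hx1 hx2 hsum
  refine ⟨fun x y hy => ?_, hperiod⟩
  calc SG x y = SG x (y - 2 * b + 2 * b) := by rw [Nat.sub_add_cancel hy]
    _ = SG x (y - 2 * b) := hSG.periodic_two_mul_b hb hx1 hx2 x _
    _ = SG (x + x1 + x2) (y - 2 * b) := (hperiod x _).symm

/-- If `0 < y₁ < 2b`, `0 < y₂ < 2b` and `y₁ + y₂ = 2b`, then `L(b;x₁,y₁;x₂,y₂)` has
diagonal periodicity (`SG*(x,y) = SG*(x+x₁+x₂, y−2b)` for `y ≥ 2b`) and it has no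
preperiod and horizontal period `x₁+x₂`: `SG(x+x₁+x₂, y) = SG(x,y)` everywhere. -/
theorem sum_eq_two_b_case (b x1 x2 y1 y2 : ℕ) (hb : 0 < b) (hx1 : 0 < x1) (hx2 : 0 < x2)
    (hy1 : 0 < y1) (hy1' : y1 < 2 * b) (hy2 : 0 < y2) (hy2' : y2 < 2 * b)
    (hsum : y1 + y2 = 2 * b)
    (SG : ℕ → ℕ → ℕ) (hSG : IsLengyelSG b x1 y1 x2 y2 SG) :
    (∀ x y : ℕ, 2 * b ≤ y →
      min (SG x y) 2 = min (SG (x + x1 + x2) (y - 2 * b)) 2) ∧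
    (∀ x y : ℕ, SG (x + x1 + x2) y = SG x y) := by
  have hgen := sum_eq_two_b_case_general b x1 x2 y1 y2 hb hx1 hx2 hsum.symm.dvd SG hSG
  exact ⟨fun x y hy => congrArg (min · 2) (hgen.1 x y hy), hgen.2⟩
end
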